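/- Let P ⊆ ℝⁿ be a convex body containing 0 in its interior, with barycenter b := (∫_P p dp)/vol(P), and let r ∈ (0,1). For every convex φ : ℝⁿ → ℝ with φ − φ_P bounded define 𝒢_r(φ) := −(1/vol(P)) ∫_P φ*(p) dp + (1/r)·log ∫_{ℝⁿ} e^{−r·φ(x) − (1−r)·φ_P(x)} dx. Then 𝒢_r is bounded from above on the set of all such φ if and only if (1−r)·φ_P(x) + r·⟨b, x⟩ ≥ 0 for all x ∈ ℝⁿ. -/

import Mathlib

open scoped InnerProductSpace
open MeasureTheory

/-- The support function `φ_P(x) = sup_{p ∈ P} ⟨x, p⟫` of a set `P`. -/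
noncomputable def suppFn {n : ℕ} (P : Set (EuclideanSpace ℝ (Fin n)))
    (x : EuclideanSpace ℝ (Fin n)) : ℝ :=
  ⨆ p : P, ⟪x, (p : EuclideanSpace ℝ (Fin n))⟫_ℝ

/-- The (real-valued) Legendre transform `φ*(p) = sup_x (⟨p, x⟩ - φ(x))`. -/
noncomputable def legendre {n : ℕ} (φ : EuclideanSpace ℝ (Fin n) → ℝ)
    (p : EuclideanSpace ℝ (Fin n)) : ℝ :=
  ⨆ x, (⟪p, x⟫_ℝ - φ x)

/-- The Legendre transform with values in `ℝ ∪ {+∞}` (as a sup of real numbers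
over a nonempty index it never takes the value `-∞`). -/
noncomputable def legendreE {n : ℕ} (φ : EuclideanSpace ℝ (Fin n) → ℝ)
    (p : EuclideanSpace ℝ (Fin n)) : EReal :=
  ⨆ x, ((⟪p, x⟫_ℝ - φ x : ℝ) : EReal)

/-- The twisted Moser–Trudinger type functional
`𝒢_r(φ) := -(1/vol P) ∫_P φ* dp + (1/r) log ∫ e^{-rφ - (1-r)φ_P} dx`. -/
noncomputable def GrFun {n : ℕ} (P : Set (EuclideanSpace ℝ (Fin n))) (r : ℝ)
    (φ : EuclideanSpace ℝ (Fin n) → ℝ) : ℝ :=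
  -((volume P).toReal)⁻¹ * (∫ p in P, legendre φ p) +
    r⁻¹ * Real.log (∫ x, Real.exp (-(r * φ x) - (1 - r) * suppFn P x))

/-!
Write `ν` for normalised Lebesgue measure on `P`, so that `b` is the mean of `ν`.

For the upper bound on `𝒢_r`, let `ℓ_x(p) = ⟪p, x⟫ - φ x`. By Fenchel–Young `φ*` dominates
`max ℓ_x ℓ_{x₀} = (ℓ_x + ℓ_{x₀}) / 2 + |ℓ_x - ℓ_{x₀}| / 2`, and since `P` has interior points the
`ν`-mean of `|ℓ_x - ℓ_{x₀}|` is at least `κ ‖x - x₀‖`, with `κ` depending on `P` only. Taking for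
`x₀` a near-maximiser of `⟪b, ·⟫ - φ` gives `φ x - ⟪b, x⟫ ≥ κ/2 ‖x - x₀‖ - ∫ φ* dν - 1`. When
`(1 - r) φ_P + r ⟪b, ·⟫ ≥ 0` this bounds the exponential integral by that of a translated
`e^{-c‖x‖}`, and the terms `∫ φ* dν` cancel in `𝒢_r`.

Conversely, for the translates `φ_P(· - a)` the Legendre transform is `⟪·, a⟫` on `P`, and
`r 𝒢_r` is at least `-((1 - r) φ_P(a) + r ⟪b, a⟫)` up to a constant; let `a` run to infinity
along a ray.
-/

open scoped ProbabilityTheory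

-- For an unbounded family both sides are the junk value `0`.
lemma toReal_iSup_coe {ι : Sort*} (f : ι → ℝ) :
    (⨆ i, (f i : EReal)).toReal = ⨆ i, f i := by
  cases isEmpty_or_nonempty ι
  · simp
  by_cases hf : BddAbove (Set.range f)
  · rw [← Monotone.map_ciSup_of_continuousAt continuous_coe_real_ereal.continuousAt
      EReal.coe_strictMono.monotone hf, EReal.toReal_coe]
  · have htop : ⨆ i, (f i : EReal) = ⊤ := EReal.eq_top_iff_forall_lt _ |>.2 fun c ↦ by
      obtain ⟨-, ⟨i, rfl⟩, hi⟩ := not_bddAbove_iff.1 hf c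
      exact (EReal.coe_lt_coe hi).trans_le (le_iSup (fun i ↦ (f i : EReal)) i)
    rw [htop, EReal.toReal_top, Real.iSup_of_not_bddAbove hf]

lemma nonneg_of_forall_le_natCast_mul {B D : ℝ} (h : ∀ t : ℕ, B ≤ t * D) : 0 ≤ D := by
  by_contra! hD
  obtain ⟨t, ht⟩ := exists_nat_gt (B / D)
  exact ((div_lt_iff_of_neg hD).1 ht).not_ge (h t)

section ExpNorm

variable {E : Type*} [NormedAddCommGroup E] [NormedSpace ℝ E] [FiniteDimensional ℝ E]
  [MeasurableSpace E] [BorelSpace E]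

lemma integrable_exp_neg_mul_norm (μ : Measure E) [μ.IsAddHaarMeasure] {c : ℝ} (hc : 0 < c) :
    Integrable (fun x : E ↦ Real.exp (-(c * ‖x‖))) μ := by
  rcases subsingleton_or_nontrivial E with hE | hE
  · exact Integrable.of_finite
  · rw [integrable_fun_norm_addHaar μ (f := fun s ↦ Real.exp (-(c * s)))]
    have hdim : (-1 : ℝ) < (Module.finrank ℝ E - 1 : ℕ) :=
      neg_one_lt_zero.trans_le (Nat.cast_nonneg _)
    simpa using integrableOn_rpow_mul_exp_neg_mul_rpow hdim one_pos hc

lemma integrable_exp_neg_add_mul_norm_sub (μ : Measure E) [μ.IsAddHaarMeasure] {c : ℝ}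
    (hc : 0 < c) (A : ℝ) (x₀ : E) :
    Integrable (fun x : E ↦ Real.exp (-(A + c * ‖x - x₀‖))) μ := by
  simpa only [neg_add, Real.exp_add] using
    ((integrable_exp_neg_mul_norm μ hc).comp_sub_right x₀).const_mul (Real.exp (-A))

lemma log_integral_exp_neg_add_mul_norm_sub (μ : Measure E) [μ.IsAddHaarMeasure] {c : ℝ}
    (hc : 0 < c) (A : ℝ) (x₀ : E) :
    Real.log (∫ x, Real.exp (-(A + c * ‖x - x₀‖)) ∂μ) =
      -A + Real.log (∫ x, Real.exp (-(c * ‖x‖)) ∂μ) := by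
  have hpos := integral_exp_pos (integrable_exp_neg_mul_norm μ hc)
  simp only [neg_add, Real.exp_add]
  rw [integral_const_mul, integral_sub_right_eq_self (fun x ↦ Real.exp (-(c * ‖x‖))) x₀,
    Real.log_mul (Real.exp_pos _).ne' hpos.ne', Real.log_exp]

end ExpNorm

lemma log_integral_exp_mono {α : Type*} [MeasurableSpace α] {μ : Measure α} [NeZero μ]
    {f g : α → ℝ} (hf : Integrable (fun x ↦ Real.exp (f x)) μ)
    (hg : Integrable (fun x ↦ Real.exp (g x)) μ) (hfg : ∀ x, f x ≤ g x) :
    Real.log (∫ x, Real.exp (f x) ∂μ) ≤ Real.log (∫ x, Real.exp (g x) ∂μ) :=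
  Real.log_le_log (integral_exp_pos hf)
    (integral_mono hf hg fun x ↦ Real.exp_le_exp.2 (hfg x))

lemma integral_cond_eq_inv_smul_setIntegral {α F : Type*} [MeasurableSpace α]
    [NormedAddCommGroup F] [NormedSpace ℝ F] (μ : Measure α) (s : Set α) (f : α → F) :
    ∫ x, f x ∂μ[|s] = (μ.real s)⁻¹ • ∫ x in s, f x ∂μ := by
  rw [ProbabilityTheory.cond, integral_smul_measure, ENNReal.toReal_inv, measureReal_def]

section Bounded

variable {X F : Type*} [PseudoMetricSpace X] [ProperSpace X] [MeasurableSpace X]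
  [OpensMeasurableSpace X] [NormedAddCommGroup F] (μ : Measure X) [IsFiniteMeasureOnCompacts μ]
  {s : Set X} {f : X → F}

lemma integrableOn_of_continuous_of_isBounded (hf : Continuous f) (hs : Bornology.IsBounded s) :
    IntegrableOn f s μ :=
  (hf.continuousOn.integrableOn_of_subset_isCompact hs.isCompact_closure
    isClosed_closure.measurableSet subset_rfl hs.isCompact_closure.measure_ne_top).mono_set
    subset_closure

lemma integrable_cond_of_continuous_of_isBounded (hf : Continuous f) (hs : Bornology.IsBounded s)
    (hs₀ : μ s ≠ 0) : Integrable f μ[|s] :=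
  (integrableOn_of_continuous_of_isBounded μ hf hs).smul_measure (ENNReal.inv_ne_top.2 hs₀)

end Bounded

section Width

variable {E : Type*} [NormedAddCommGroup E] [InnerProductSpace ℝ E]

lemma exists_norm_le_one_inner_eq_norm (y : E) : ∃ u : E, ‖u‖ ≤ 1 ∧ ⟪u, y⟫_ℝ = ‖y‖ := by
  refine ⟨‖y‖⁻¹ • y, ?_, ?_⟩
  · rw [norm_smul, norm_inv, norm_norm]
    exact inv_mul_le_one
  · rw [real_inner_smul_left, real_inner_self_eq_norm_mul_norm, ← mul_assoc, inv_mul_mul_self]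

lemma exists_closedBall_subset_le_abs_inner_sub (a : E) {ρ : ℝ} (hρ : 0 ≤ ρ) (y : E) (c : ℝ) :
    ∃ q, Metric.closedBall q ρ ⊆ Metric.closedBall a (3 * ρ) ∧
      ∀ p ∈ Metric.closedBall q ρ, ρ * ‖y‖ ≤ |⟪p, y⟫_ℝ - c| := by
  obtain ⟨u, hu, huy⟩ := exists_norm_le_one_inner_eq_norm y
  have hball : ∀ v : E, ‖v‖ ≤ 2 * ρ →
      Metric.closedBall (a + v) ρ ⊆ Metric.closedBall a (3 * ρ) := fun v hv ↦
    Metric.closedBall_subset_closedBall' (by simp only [dist_self_add_left]; linarith)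
  have hdist : ∀ q, ∀ p ∈ Metric.closedBall q ρ, |⟪p, y⟫_ℝ - ⟪q, y⟫_ℝ| ≤ ρ * ‖y‖ := by
    intro q p hp
    rw [← inner_sub_left]
    exact (abs_real_inner_le_norm _ _).trans
      (mul_le_mul_of_nonneg_right (mem_closedBall_iff_norm.1 hp) (norm_nonneg y))
  have hnorm : ‖(2 * ρ) • u‖ ≤ 2 * ρ := by
    rw [norm_smul, Real.norm_of_nonneg (by positivity)]
    exact mul_le_of_le_one_right (by positivity) hu
  -- Move away from `a` towards the side of the hyperplane `⟪·, y⟫ = c` on which `a` lies.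
  rcases le_total c ⟪a, y⟫_ℝ with hc | hc
  · refine ⟨a + (2 * ρ) • u, hball _ hnorm, fun p hp ↦ le_abs.2 (.inl ?_)⟩
    have := (abs_le.1 (hdist _ p hp)).1
    rw [inner_add_left, real_inner_smul_left, huy] at this
    linarith
  · refine ⟨a + -((2 * ρ) • u), hball _ (by rwa [norm_neg]), fun p hp ↦ le_abs.2 (.inr ?_)⟩
    have := (abs_le.1 (hdist _ p hp)).2
    rw [inner_add_left, inner_neg_left, real_inner_smul_left, huy] at this
    linarith

variable [FiniteDimensional ℝ E] [MeasurableSpace E] [BorelSpace E]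

lemma exists_pos_mul_norm_le_integral_cond_abs_inner_sub (μ : Measure E) [μ.IsAddHaarMeasure]
    {s : Set E} (hs : Bornology.IsBounded s) (hint : (interior s).Nonempty) :
    ∃ κ > 0, ∀ (y : E) (c : ℝ), κ * ‖y‖ ≤ ∫ p, |⟪p, y⟫_ℝ - c| ∂μ[|s] := by
  obtain ⟨a, ha⟩ := hint
  obtain ⟨ρ, hρ, hball⟩ : ∃ ρ > 0, Metric.closedBall a (3 * ρ) ⊆ s := by
    obtain ⟨ε, hε, hball⟩ := Metric.nhds_basis_closedBall.mem_iff.1 (mem_interior_iff_mem_nhds.1 ha)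
    exact ⟨ε / 3, by positivity, by rwa [mul_div_cancel₀ _ three_ne_zero]⟩
  have hm : 0 < μ.real (Metric.closedBall 0 ρ) := ENNReal.toReal_pos
    (Metric.measure_closedBall_pos μ _ hρ).ne' measure_closedBall_lt_top.ne
  have hs₀ : 0 < μ.real s := ENNReal.toReal_pos
    (Measure.measure_pos_of_nonempty_interior μ ⟨a, ha⟩).ne' hs.measure_lt_top.ne
  refine ⟨(μ.real s)⁻¹ * (ρ * μ.real (Metric.closedBall 0 ρ)), by positivity, fun y c ↦ ?_⟩
  obtain ⟨q, hq, hle⟩ := exists_closedBall_subset_le_abs_inner_sub a hρ.le y c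
  have hint : IntegrableOn (fun p ↦ |⟪p, y⟫_ℝ - c|) s μ :=
    integrableOn_of_continuous_of_isBounded μ (by fun_prop) hs
  have hset : ρ * ‖y‖ * μ.real (Metric.closedBall 0 ρ) ≤ ∫ p in s, |⟪p, y⟫_ℝ - c| ∂μ := calc
    _ = ρ * ‖y‖ * μ.real (Metric.closedBall q ρ) := by
      rw [Measure.addHaar_real_closedBall_center μ q]
    _ ≤ ∫ p in Metric.closedBall q ρ, |⟪p, y⟫_ℝ - c| ∂μ :=
      setIntegral_ge_of_const_le_real measurableSet_closedBall measure_closedBall_lt_top.ne hle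
        (hint.mono_set (hq.trans hball))
    _ ≤ ∫ p in s, |⟪p, y⟫_ℝ - c| ∂μ :=
      setIntegral_mono_set hint (.of_forall fun _ ↦ abs_nonneg _) (hq.trans hball).eventuallyLE
  rw [integral_cond_eq_inv_smul_setIntegral, smul_eq_mul, mul_assoc]
  exact mul_le_mul_of_nonneg_left (by linarith) (by positivity)

end Width

section FenchelYoung

variable {E : Type*} [NormedAddCommGroup E] [InnerProductSpace ℝ E] [CompleteSpace E]
  [MeasurableSpace E] {ν : Measure E} [IsProbabilityMeasure ν] {φ f : E → ℝ}

lemma add_integral_abs_le_two_mul_integral_of_fenchelYoung (hid : Integrable (fun p : E ↦ p) ν)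
    (hf : Integrable f ν) (hφf : ∀ᵐ p ∂ν, ∀ x, ⟪p, x⟫_ℝ - φ x ≤ f p) (x x₀ : E) :
    (⟪∫ p, p ∂ν, x⟫_ℝ - φ x) + (⟪∫ p, p ∂ν, x₀⟫_ℝ - φ x₀) +
      ∫ p, |⟪p, x - x₀⟫_ℝ - (φ x - φ x₀)| ∂ν ≤ 2 * ∫ p, f p ∂ν := by
  have hinner : ∀ z, Integrable (fun p ↦ ⟪p, z⟫_ℝ) ν := fun z ↦ hid.inner_const z
  have haff : ∀ z, Integrable (fun p ↦ ⟪p, z⟫_ℝ - φ z) ν := fun z ↦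
    (hinner z).sub (integrable_const _)
  have hmean : ∀ z, ∫ p, (⟪p, z⟫_ℝ - φ z) ∂ν = ⟪∫ p, p ∂ν, z⟫_ℝ - φ z := by
    intro z
    rw [integral_sub (hinner z) (integrable_const _), integral_const, probReal_univ, one_smul]
    simp_rw [real_inner_comm z]
    rw [integral_inner hid, real_inner_comm]
  have habs : Integrable (fun p ↦ |⟪p, x - x₀⟫_ℝ - (φ x - φ x₀)|) ν :=
    ((hinner _).sub (integrable_const _)).abs
  rw [← hmean, ← hmean, ← integral_add (haff x) (haff x₀), ← integral_const_mul]
  refine (integral_add ((haff x).add (haff x₀)) habs).symm.trans_le ?_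
  refine integral_mono_ae (((haff x).add (haff x₀)).add habs) (hf.const_mul 2) ?_
  filter_upwards [hφf] with p hp
  have hx := hp x
  have hx₀ := hp x₀
  simp only [Pi.add_apply, inner_sub_right]
  rcases abs_cases (⟪p, x⟫_ℝ - ⟪p, x₀⟫_ℝ - (φ x - φ x₀)) with ⟨h, -⟩ | ⟨h, -⟩ <;> linarith

lemma exists_forall_mul_norm_sub_le_of_fenchelYoung (hid : Integrable (fun p : E ↦ p) ν)
    (hf : Integrable f ν) (hφf : ∀ᵐ p ∂ν, ∀ x, ⟪p, x⟫_ℝ - φ x ≤ f p) {κ : ℝ}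
    (hκ : ∀ (y : E) (c : ℝ), κ * ‖y‖ ≤ ∫ p, |⟪p, y⟫_ℝ - c| ∂ν) :
    ∃ x₀, ∀ x, κ / 2 * ‖x - x₀‖ - ∫ p, f p ∂ν - 1 ≤ φ x - ⟪∫ p, p ∂ν, x⟫_ℝ := by
  set b := ∫ p, p ∂ν
  have hkey : ∀ x x₀, (⟪b, x⟫_ℝ - φ x) + (⟪b, x₀⟫_ℝ - φ x₀) + κ * ‖x - x₀‖ ≤
      2 * ∫ p, f p ∂ν := fun x x₀ ↦
    (add_le_add_right (hκ _ _) _).trans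
      (add_integral_abs_le_two_mul_integral_of_fenchelYoung hid hf hφf x x₀)
  have hbdd : BddAbove (Set.range fun x ↦ ⟪b, x⟫_ℝ - φ x) := by
    refine ⟨∫ p, f p ∂ν, Set.forall_mem_range.2 fun x ↦ ?_⟩
    have := hkey x x
    rw [sub_self, norm_zero, mul_zero] at this
    linarith
  obtain ⟨x₀, hx₀⟩ := exists_lt_of_lt_ciSup (sub_one_lt (⨆ x, (⟪b, x⟫_ℝ - φ x)))
  refine ⟨x₀, fun x ↦ ?_⟩
  have hx := le_ciSup hbdd x
  have := hkey x x₀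
  linarith

end FenchelYoung

section SupportFunction

variable {n : ℕ} {P : Set (EuclideanSpace ℝ (Fin n))} (x y : EuclideanSpace ℝ (Fin n))

lemma inner_le_suppFn (hP : Bornology.IsBounded P) {p : EuclideanSpace ℝ (Fin n)} (hp : p ∈ P) :
    ⟪x, p⟫_ℝ ≤ suppFn P x := by
  have hbdd : BddAbove (Set.range fun q : P ↦ ⟪x, (q : EuclideanSpace ℝ (Fin n))⟫_ℝ) := by
    rw [← Set.image_eq_range]
    exact (hP.isCompact_closure.bddAbove_image (f := fun q ↦ ⟪x, q⟫_ℝ) (by fun_prop)).mono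
      (Set.image_mono subset_closure)
  exact le_ciSup hbdd ⟨p, hp⟩

lemma suppFn_le (hne : P.Nonempty) {c : ℝ} (h : ∀ p ∈ P, ⟪x, p⟫_ℝ ≤ c) : suppFn P x ≤ c :=
  have := hne.to_subtype
  ciSup_le fun p ↦ h p p.2

lemma suppFn_smul_of_nonneg (P : Set (EuclideanSpace ℝ (Fin n))) {t : ℝ} (ht : 0 ≤ t) :
    suppFn P (t • x) = t * suppFn P x := by
  simp only [suppFn, real_inner_smul_left, Real.mul_iSup_of_nonneg ht]

lemma suppFn_zero (P : Set (EuclideanSpace ℝ (Fin n))) : suppFn P 0 = 0 := by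
  simpa using suppFn_smul_of_nonneg 0 P le_rfl

lemma suppFn_add_le (hP : Bornology.IsBounded P) (hne : P.Nonempty) :
    suppFn P (x + y) ≤ suppFn P x + suppFn P y :=
  suppFn_le _ hne fun p hp ↦ by
    rw [inner_add_left]
    exact add_le_add (inner_le_suppFn x hP hp) (inner_le_suppFn y hP hp)

lemma convexOn_suppFn (hP : Bornology.IsBounded P) (hne : P.Nonempty) :
    ConvexOn ℝ Set.univ (suppFn P) := by
  refine ⟨convex_univ, fun x _ y _ s t hs ht _ ↦ ?_⟩
  rw [smul_eq_mul, smul_eq_mul, ← suppFn_smul_of_nonneg x P hs, ← suppFn_smul_of_nonneg y P ht]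
  exact suppFn_add_le _ _ hP hne

lemma convexOn_suppFn_sub (hP : Bornology.IsBounded P) (hne : P.Nonempty)
    (a : EuclideanSpace ℝ (Fin n)) : ConvexOn ℝ Set.univ fun x ↦ suppFn P (x - a) := by
  simpa only [Set.preimage_univ, Function.comp_def, neg_add_eq_sub] using
    (convexOn_suppFn hP hne).translate_right (-a)

lemma continuous_suppFn (hP : Bornology.IsBounded P) (hne : P.Nonempty) :
    Continuous (suppFn P) :=
  (convexOn_suppFn hP hne).locallyLipschitz.continuous

lemma mul_norm_le_suppFn (hP : Bornology.IsBounded P) {ρ : ℝ} (hρ : 0 ≤ ρ)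
    (hball : Metric.closedBall 0 ρ ⊆ P) : ρ * ‖x‖ ≤ suppFn P x := by
  obtain ⟨u, hu, hux⟩ := exists_norm_le_one_inner_eq_norm x
  have hmem : ρ • u ∈ P := hball <| by
    rw [mem_closedBall_zero_iff, norm_smul, Real.norm_of_nonneg hρ]
    exact mul_le_of_le_one_right hρ hu
  rw [← hux, ← real_inner_smul_left, real_inner_comm]
  exact inner_le_suppFn x hP hmem

lemma abs_suppFn_sub_suppFn_le {K : ℝ} (hne : P.Nonempty) (hK : P ⊆ Metric.closedBall 0 K) :
    |suppFn P x - suppFn P y| ≤ K * ‖x - y‖ := by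
  have hP : Bornology.IsBounded P := Metric.isBounded_closedBall.subset hK
  have hle : ∀ z, suppFn P z ≤ K * ‖z‖ := fun z ↦ suppFn_le z hne fun p hp ↦ by
    rw [mul_comm]
    exact (real_inner_le_norm z p).trans
      (mul_le_mul_of_nonneg_left (mem_closedBall_zero_iff.1 (hK hp)) (norm_nonneg z))
  have hsub : ∀ z w, suppFn P z ≤ suppFn P w + K * ‖z - w‖ := fun z w ↦ by
    simpa using (suppFn_add_le w (z - w) hP hne).trans (add_le_add_right (hle (z - w)) _)
  rw [abs_sub_le_iff]
  refine ⟨by linarith [hsub x y], ?_⟩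
  rw [norm_sub_rev]
  linarith [hsub y x]

lemma abs_suppFn_sub_sub_suppFn_le {K : ℝ} (hne : P.Nonempty) (hK : P ⊆ Metric.closedBall 0 K)
    (a : EuclideanSpace ℝ (Fin n)) : |suppFn P (x - a) - suppFn P x| ≤ K * ‖a‖ := by
  simpa only [sub_sub_cancel_left, norm_neg] using abs_suppFn_sub_suppFn_le (x - a) x hne hK

end SupportFunction

section Legendre

variable {n : ℕ} {P : Set (EuclideanSpace ℝ (Fin n))} {φ : EuclideanSpace ℝ (Fin n) → ℝ}

lemma legendre_eq_toReal_legendreE (φ : EuclideanSpace ℝ (Fin n) → ℝ)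
    (p : EuclideanSpace ℝ (Fin n)) : legendre φ p = (legendreE φ p).toReal :=
  (toReal_iSup_coe _).symm

lemma measurable_legendre (φ : EuclideanSpace ℝ (Fin n) → ℝ) : Measurable (legendre φ) := by
  have hlsc : LowerSemicontinuous (legendreE φ) := lowerSemicontinuous_iSup fun x ↦
    (continuous_coe_real_ereal.comp (by fun_prop)).lowerSemicontinuous
  simpa only [← legendre_eq_toReal_legendreE] using hlsc.measurable.ereal_toReal

variable {M : ℝ} {p : EuclideanSpace ℝ (Fin n)}

lemma inner_sub_le_of_suppFn_sub_le (hP : Bornology.IsBounded P)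
    (hM : ∀ x, suppFn P x - M ≤ φ x) (hp : p ∈ P) (x : EuclideanSpace ℝ (Fin n)) :
    ⟪p, x⟫_ℝ - φ x ≤ M := by
  linarith [hM x, inner_le_suppFn x hP hp, real_inner_comm p x]

lemma inner_sub_le_legendre (hP : Bornology.IsBounded P) (hM : ∀ x, suppFn P x - M ≤ φ x)
    (hp : p ∈ P) (x : EuclideanSpace ℝ (Fin n)) : ⟪p, x⟫_ℝ - φ x ≤ legendre φ p :=
  le_ciSup (f := fun x ↦ ⟪p, x⟫_ℝ - φ x)
    ⟨M, Set.forall_mem_range.2 (inner_sub_le_of_suppFn_sub_le hP hM hp)⟩ x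

lemma integrable_legendre_cond (hP : Bornology.IsBounded P) (hPm : MeasurableSet P)
    (hM : ∀ x, suppFn P x - M ≤ φ x) : Integrable (legendre φ) volume[|P] := by
  refine .of_bound (measurable_legendre φ).aestronglyMeasurable (max M (φ 0))
    (ProbabilityTheory.ae_cond_of_forall_mem hPm fun p hp ↦ abs_le'.2 ⟨?_, ?_⟩)
  · exact (ciSup_le (inner_sub_le_of_suppFn_sub_le hP hM hp)).trans (le_max_left _ _)
  · have := inner_sub_le_legendre hP hM hp 0
    rw [inner_zero_right] at this
    linarith [le_max_right M (φ 0)]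

lemma legendre_suppFn_sub (hP : Bornology.IsBounded P) (hp : p ∈ P)
    (a : EuclideanSpace ℝ (Fin n)) : legendre (fun x ↦ suppFn P (x - a)) p = ⟪p, a⟫_ℝ := by
  have hle : ∀ x, ⟪p, x⟫_ℝ - suppFn P (x - a) ≤ ⟪p, a⟫_ℝ := fun x ↦ by
    have := inner_le_suppFn (x - a) hP hp
    rw [real_inner_comm, inner_sub_right] at this
    linarith
  refine le_antisymm (ciSup_le hle) ?_
  have ha : ⟪p, a⟫_ℝ = ⟪p, a⟫_ℝ - suppFn P (a - a) := by rw [sub_self, suppFn_zero, sub_zero]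
  rw [ha]
  exact le_ciSup (f := fun x ↦ ⟪p, x⟫_ℝ - suppFn P (x - a)) ⟨_, Set.forall_mem_range.2 hle⟩ a

end Legendre

section Functional

variable {n : ℕ} {P : Set (EuclideanSpace ℝ (Fin n))} {r : ℝ}
  {φ : EuclideanSpace ℝ (Fin n) → ℝ}

lemma GrFun_eq_integral_cond (P : Set (EuclideanSpace ℝ (Fin n))) (r : ℝ)
    (φ : EuclideanSpace ℝ (Fin n) → ℝ) :
    GrFun P r φ = -∫ p, legendre φ p ∂volume[|P] +
      r⁻¹ * Real.log (∫ x, Real.exp (-(r * φ x) - (1 - r) * suppFn P x)) := by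
  rw [GrFun, integral_cond_eq_inv_smul_setIntegral, smul_eq_mul, neg_mul, measureReal_def]

lemma integrable_exp_neg_sub_suppFn (hP : Bornology.IsBounded P) (h0 : 0 ∈ interior P)
    (hr : 0 < r) (hφ : Measurable φ) {M : ℝ} (hM : ∀ x, suppFn P x - M ≤ φ x) :
    Integrable (fun x ↦ Real.exp (-(r * φ x) - (1 - r) * suppFn P x)) := by
  obtain ⟨ρ, hρ, hball⟩ := Metric.nhds_basis_closedBall.mem_iff.1 (mem_interior_iff_mem_nhds.1 h0)
  have hsupp := continuous_suppFn hP ⟨0, interior_subset h0⟩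
  refine (integrable_exp_neg_add_mul_norm_sub volume hρ (-(r * M)) 0).mono'
    (by fun_prop) (.of_forall fun x ↦ ?_)
  rw [Real.norm_of_nonneg (Real.exp_pos _).le, Real.exp_le_exp, sub_zero]
  linarith [mul_norm_le_suppFn x hP hρ.le hball, mul_le_mul_of_nonneg_left (hM x) hr.le]

lemma exists_forall_GrFun_le (hP : Bornology.IsBounded P) (hPm : MeasurableSet P)
    (h0 : 0 ∈ interior P) (hr : 0 < r)
    (hpos : ∀ x, 0 ≤ (1 - r) * suppFn P x + r * ⟪∫ p, p ∂volume[|P], x⟫_ℝ) :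
    ∃ C : ℝ, ∀ φ : EuclideanSpace ℝ (Fin n) → ℝ, Measurable φ →
      (∃ M : ℝ, ∀ x, suppFn P x - M ≤ φ x) → GrFun P r φ ≤ C := by
  have hP₀ : volume P ≠ 0 := (Measure.measure_pos_of_nonempty_interior volume ⟨0, h0⟩).ne'
  have := ProbabilityTheory.cond_isProbabilityMeasure_of_finite hP₀ hP.measure_lt_top.ne
  obtain ⟨κ, hκ₀, hκ⟩ := exists_pos_mul_norm_le_integral_cond_abs_inner_sub volume hP ⟨0, h0⟩
  refine ⟨1 + r⁻¹ * Real.log (∫ x : EuclideanSpace ℝ (Fin n), Real.exp (-(r * (κ / 2) * ‖x‖))),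
    fun φ hφ ⟨M, hM⟩ ↦ ?_⟩
  rw [GrFun_eq_integral_cond]
  set A := ∫ p, legendre φ p ∂volume[|P]
  obtain ⟨x₀, hx₀⟩ := exists_forall_mul_norm_sub_le_of_fenchelYoung
    (integrable_cond_of_continuous_of_isBounded volume continuous_id hP hP₀)
    (integrable_legendre_cond hP hPm hM)
    (ProbabilityTheory.ae_cond_of_forall_mem hPm fun p hp ↦ inner_sub_le_legendre hP hM hp) hκ
  have hlog : Real.log (∫ x, Real.exp (-(r * φ x) - (1 - r) * suppFn P x)) ≤
      r * (A + 1) + Real.log (∫ x : EuclideanSpace ℝ (Fin n),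
        Real.exp (-(r * (κ / 2) * ‖x‖))) := by
    have hc : 0 < r * (κ / 2) := by positivity
    rw [← neg_neg (r * (A + 1)), ← log_integral_exp_neg_add_mul_norm_sub volume hc _ x₀]
    refine log_integral_exp_mono (integrable_exp_neg_sub_suppFn hP h0 hr hφ hM)
      (integrable_exp_neg_add_mul_norm_sub volume hc _ x₀) fun x ↦ ?_
    linarith [hpos x, mul_le_mul_of_nonneg_left (hx₀ x) hr.le]
  have := mul_le_mul_of_nonneg_left hlog (inv_nonneg.2 hr.le)
  rw [mul_add, inv_mul_cancel_left₀ hr.ne'] at this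
  linarith

lemma exists_forall_le_GrFun_suppFn_sub (hP : Bornology.IsBounded P) (hPm : MeasurableSet P)
    (h0 : 0 ∈ interior P) (hr : 0 < r) :
    ∃ C : ℝ, ∀ a, C - ((1 - r) * suppFn P a + r * ⟪∫ p, p ∂volume[|P], a⟫_ℝ) ≤
      r * GrFun P r (fun x ↦ suppFn P (x - a)) := by
  have hne : P.Nonempty := ⟨0, interior_subset h0⟩
  have hP₀ : volume P ≠ 0 := (Measure.measure_pos_of_nonempty_interior volume ⟨0, h0⟩).ne'
  obtain ⟨K, hK₀, hK⟩ := hP.subset_closedBall_lt 0 0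
  have hc : 0 < r * K + |1 - r| * K := by positivity
  refine ⟨Real.log (∫ x : EuclideanSpace ℝ (Fin n),
    Real.exp (-((r * K + |1 - r| * K) * ‖x‖))), fun a ↦ ?_⟩
  have hlegendre : ∫ p, legendre (fun x ↦ suppFn P (x - a)) p ∂volume[|P] =
      ⟪∫ p, p ∂volume[|P], a⟫_ℝ := by
    rw [real_inner_comm, ← integral_inner (f := fun p ↦ p)
      (integrable_cond_of_continuous_of_isBounded volume continuous_id hP hP₀)]
    exact integral_congr_ae (ProbabilityTheory.ae_cond_of_forall_mem hPm fun p hp ↦ by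
      rw [legendre_suppFn_sub hP hp, real_inner_comm])
  have hlog : -((1 - r) * suppFn P a) + Real.log (∫ x : EuclideanSpace ℝ (Fin n),
      Real.exp (-((r * K + |1 - r| * K) * ‖x‖))) ≤
      Real.log (∫ x, Real.exp (-(r * suppFn P (x - a)) - (1 - r) * suppFn P x)) := by
    rw [← log_integral_exp_neg_add_mul_norm_sub volume hc _ a]
    have hint := integrable_exp_neg_sub_suppFn hP h0 hr
      ((continuous_suppFn hP hne).comp (continuous_sub_right a)).measurable
      fun x ↦ sub_le_of_abs_sub_le_left (abs_suppFn_sub_sub_suppFn_le x hne hK a)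
    refine log_integral_exp_mono (integrable_exp_neg_add_mul_norm_sub volume hc _ a) hint
      fun x ↦ ?_
    have hx : suppFn P (x - a) ≤ K * ‖x - a‖ := by
      simpa [suppFn_zero] using (abs_le.1 (abs_suppFn_sub_suppFn_le (x - a) 0 hne hK)).2
    have hxa : (1 - r) * (suppFn P x - suppFn P a) ≤ |1 - r| * (K * ‖x - a‖) :=
      (le_abs_self _).trans <| (abs_mul _ _).trans_le <|
        mul_le_mul_of_nonneg_left (abs_suppFn_sub_suppFn_le x a hne hK) (abs_nonneg _)
    linarith [mul_le_mul_of_nonneg_left hx hr.le]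
  rw [GrFun_eq_integral_cond, hlegendre, mul_add, mul_inv_cancel_left₀ hr.ne']
  linarith

end Functional

theorem statement17_general {n : ℕ} (P : Set (EuclideanSpace ℝ (Fin n)))
    (hPbdd : Bornology.IsBounded P) (hPmeas : MeasurableSet P)
    (h0 : (0 : EuclideanSpace ℝ (Fin n)) ∈ interior P) (r : ℝ) (hr : 0 < r)
    (b : EuclideanSpace ℝ (Fin n))
    (hb : b = ((volume P).toReal)⁻¹ • (∫ p in P, p)) :
    (∃ C : ℝ, ∀ φ : EuclideanSpace ℝ (Fin n) → ℝ,
        ConvexOn ℝ Set.univ φ → (∃ M : ℝ, ∀ x, |φ x - suppFn P x| ≤ M) →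
        GrFun P r φ ≤ C) ↔
      (∀ x, 0 ≤ (1 - r) * suppFn P x + r * ⟪b, x⟫_ℝ) := by
  obtain rfl : b = ∫ p, p ∂volume[|P] := by
    rw [hb, integral_cond_eq_inv_smul_setIntegral, measureReal_def]
  have hne : P.Nonempty := ⟨0, interior_subset h0⟩
  constructor
  · rintro ⟨C, hC⟩ x
    obtain ⟨L, hL⟩ := exists_forall_le_GrFun_suppFn_sub hPbdd hPmeas h0 hr
    obtain ⟨K, hK⟩ := hPbdd.subset_closedBall 0
    refine nonneg_of_forall_le_natCast_mul (B := L - r * C) fun t ↦ ?_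
    have hle := hC _ (convexOn_suppFn_sub hPbdd hne ((t : ℝ) • x))
      ⟨_, fun z ↦ abs_suppFn_sub_sub_suppFn_le z hne hK ((t : ℝ) • x)⟩
    have hlow := hL ((t : ℝ) • x)
    rw [suppFn_smul_of_nonneg x P t.cast_nonneg, real_inner_smul_right] at hlow
    linarith [mul_le_mul_of_nonneg_left hle hr.le]
  · intro hpos
    obtain ⟨C, hC⟩ := exists_forall_GrFun_le hPbdd hPmeas h0 hr hpos
    exact ⟨C, fun φ hφ ⟨M, hM⟩ ↦ hC φ hφ.locallyLipschitz.continuous.measurable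
      ⟨M, fun x ↦ by linarith [(abs_le.1 (hM x)).1]⟩⟩

/-- For `r ∈ (0,1)`, the functional `𝒢_r` is bounded above
on the set of convex `φ` with `φ - φ_P` bounded if and only if
`(1-r)φ_P(x) + r⟨b, x⟩ ≥ 0` for all `x`, where `b` is the barycenter of `P`. -/
theorem statement17 {n : ℕ} (P : Set (EuclideanSpace ℝ (Fin n)))
    (hPcomp : IsCompact P) (hPconv : Convex ℝ P)
    (h0 : (0 : EuclideanSpace ℝ (Fin n)) ∈ interior P)
    (r : ℝ) (hr : r ∈ Set.Ioo (0 : ℝ) 1)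
    (b : EuclideanSpace ℝ (Fin n))
    (hb : b = ((volume P).toReal)⁻¹ • (∫ p in P, p)) :
    (∃ C : ℝ, ∀ φ : EuclideanSpace ℝ (Fin n) → ℝ,
        ConvexOn ℝ Set.univ φ → (∃ M : ℝ, ∀ x, |φ x - suppFn P x| ≤ M) →
        GrFun P r φ ≤ C) ↔
      (∀ x, 0 ≤ (1 - r) * suppFn P x + r * ⟪b, x⟫_ℝ) :=
  statement17_general P hPcomp.isBounded hPcomp.measurableSet h0 r hr.1 b hb
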